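/- For every integer m ≥ 3, the number of OT-admissible words of length m over Fin 8 satisfies the recursion N8(m) = 5·N8(m−1) + 5·N8(m−2); moreover N8(1) = 8 and N8(2) = 50 (so that the recursion also holds at m = 2 with the convention N8(0) = 2). -/

import Mathlib

/-!
Prefixing a word with `2 2` forces its first letter into `B2` and has no other effect, and likewise
`5 5` and `B1`. Hence `N8 m` counts the ways to continue `2 2` or `5 5` by `m` letters, which for
`m = 0` gives the convention `N8 0 = 2`. The number of continuations of a word depends only on its
last two letters, and these pairs fall into just two classes: how many next letters lead to each
class depends only on the class of the pair, as recorded by `M = !![4, 3; 3, 1]`. So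
`N8 m = 2 * (M ^ m *ᵥ 1) 1`, and the recursion is the Cayley–Hamilton identity
`M ^ 2 = 5 • M + 5 • 1`.
-/

namespace OTLOCO

/-- Levels of GF(8): `0,1,α,α²,α³,α⁴,α⁵,α⁶` correspond to `0,…,7`. -/
def B1 : Finset (Fin 8) := {0, 1, 4, 5}
def B2 : Finset (Fin 8) := {2, 3, 6, 7}

/-- Forbidden 2-tuples of `OT⁸`, read left-to-right. -/
def OTpair (a b : Fin 8) : Prop :=
  (a = 2 ∧ b ∈ B1) ∨ (a ∈ B1 ∧ b = 2) ∨ (a = 5 ∧ b ∈ B2) ∨ (a ∈ B2 ∧ b = 5)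

/-- Forbidden 3-tuples of `OT⁸`, read left-to-right. -/
def OTtriple (a x b : Fin 8) : Prop :=
  (a ∈ ({0, 1, 4} : Finset (Fin 8)) ∧ x ∈ ({3, 6} : Finset (Fin 8)) ∧
    b ∈ ({0, 1, 4} : Finset (Fin 8))) ∨
  (a ∈ ({3, 6, 7} : Finset (Fin 8)) ∧ x ∈ ({1, 4} : Finset (Fin 8)) ∧
    b ∈ ({3, 6, 7} : Finset (Fin 8)))

instance (a b : Fin 8) : Decidable (OTpair a b) := by unfold OTpair; infer_instance
instance (a x b : Fin 8) : Decidable (OTtriple a x b) := by unfold OTtriple; infer_instance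

/-- A word `w : Fin m → Fin 8` (index `0` is the leftmost symbol) is OT-admissible
if it contains no element of `OT⁸` as a contiguous subword. -/
def OTadm {m : ℕ} (w : Fin m → Fin 8) : Prop :=
  (∀ i j : Fin m, (j : ℕ) = (i : ℕ) + 1 → ¬ OTpair (w i) (w j)) ∧
  (∀ i j k : Fin m, (j : ℕ) = (i : ℕ) + 1 → (k : ℕ) = (i : ℕ) + 2 →
    ¬ OTtriple (w i) (w j) (w k))

instance {m : ℕ} : DecidablePred (@OTadm m) := fun w => by
  unfold OTadm; infer_instance

/-- Number of OT-admissible words of length `m`, with the convention `N8 0 = 2`. -/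
def N8 (m : ℕ) : ℕ :=
  if m = 0 then 2
  else (Finset.univ.filter (fun w : Fin m → Fin 8 => OTadm w)).card

open Finset Matrix

section Words

variable {α : Type*}

/-- The word `w` has no two consecutive letters related by `P` and no three consecutive letters
related by `T`. The quantifiers follow `OTadm`, so that `OTadm` is definitionally
`Avoids OTpair OTtriple`. -/
def Avoids (P : α → α → Prop) (T : α → α → α → Prop) {m : ℕ} (w : Fin m → α) : Prop :=
  (∀ i j : Fin m, (j : ℕ) = i + 1 → ¬ P (w i) (w j)) ∧
  (∀ i j k : Fin m, (j : ℕ) = i + 1 → (k : ℕ) = i + 2 → ¬ T (w i) (w j) (w k))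

instance (P : α → α → Prop) (T : α → α → α → Prop) [DecidableRel P]
    [∀ a b c, Decidable (T a b c)] {m : ℕ} : DecidablePred (Avoids P T (m := m)) := fun w => by
  unfold Avoids; infer_instance

variable {P : α → α → Prop} {T : α → α → α → Prop} {m : ℕ} {a b : α}

theorem avoids_vecCons (a : α) (w : Fin m → α) :
    Avoids P T (vecCons a w) ↔
      ((∀ j : Fin m, (j : ℕ) = 0 → ¬ P a (w j)) ∧
        ∀ j k : Fin m, (j : ℕ) = 0 → (k : ℕ) = 1 → ¬ T a (w j) (w k)) ∧ Avoids P T w := by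
  simpa [Avoids, Fin.forall_fin_succ] using and_and_and_comm

theorem avoids_vecCons_vecCons_fin_zero (a b : α) (w : Fin 0 → α) :
    Avoids P T (vecCons a (vecCons b w)) ↔ ¬ P a b := by
  simp [Avoids]

theorem avoids_vecCons_vecCons_vecCons (a b c : α) (w : Fin m → α) :
    Avoids P T (vecCons a (vecCons b (vecCons c w))) ↔
      (¬ P a b ∧ ¬ T a b c) ∧ Avoids P T (vecCons b (vecCons c w)) := by
  rw [avoids_vecCons]
  simp [Fin.forall_fin_succ]

theorem avoids_vecCons_vecCons_self (hP : ¬ P a a) (hT : ∀ b c, ¬ T a b c) (w : Fin (m + 1) → α) :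
    Avoids P T (vecCons a (vecCons a w)) ↔ ¬ P a (w 0) ∧ Avoids P T w := by
  simp [avoids_vecCons, hP, hT]

theorem card_filter_eq_sum_vecCons [Fintype α] (Q : (Fin (m + 1) → α) → Prop) [DecidablePred Q] :
    #{w | Q w} = ∑ c, #{w : Fin m → α | Q (vecCons c w)} := by
  simp only [card_filter]
  rw [← (Fin.consEquiv fun _ : Fin (m + 1) => α).sum_comp, Fintype.sum_prod_type]
  rfl

end Words

section Extensions

variable {α : Type*} [Fintype α] (P : α → α → Prop) (T : α → α → α → Prop)
  [DecidableRel P] [∀ a b c, Decidable (T a b c)]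

/-- The number of words `w` of length `n` for which `a b w` avoids `P` and `T`. If `P` allows
`a b`, this is the number of paths of length `n` from the state `(a, b)` in the transfer graph of
the constraint. -/
def numExtensions (n : ℕ) (a b : α) : ℕ :=
  #{w : Fin n → α | Avoids P T (vecCons a (vecCons b w))}

variable {P T} {a b : α}

theorem numExtensions_eq_zero (h : P a b) (n : ℕ) : numExtensions P T n a b = 0 := by
  simp [numExtensions, avoids_vecCons, Fin.forall_fin_succ, h]

theorem numExtensions_zero (h : ¬ P a b) : numExtensions P T 0 a b = 1 := by
  simp [numExtensions, avoids_vecCons_vecCons_fin_zero, h]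

theorem numExtensions_succ (h : ¬ P a b) (n : ℕ) :
    numExtensions P T (n + 1) a b = ∑ c with ¬ T a b c, numExtensions P T n b c := by
  simp only [numExtensions, card_filter_eq_sum_vecCons, avoids_vecCons_vecCons_vecCons, sum_filter]
  refine sum_congr rfl fun c _ => ?_
  split_ifs with hT <;> simp [h, hT]

-- The classes of `κ` form an equitable partition of the transfer graph with quotient matrix `M`.
theorem numExtensions_eq_pow_mulVec {ι : Type*} [Fintype ι] [DecidableEq ι]
    {κ : α → α → ι} {M : Matrix ι ι ℕ}
    (hM : ∀ a b, ¬ P a b → ∀ j, #{c | (¬ T a b c ∧ ¬ P b c) ∧ κ b c = j} = M (κ a b) j)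
    (n : ℕ) (h : ¬ P a b) :
    numExtensions P T n a b = (M ^ n *ᵥ 1) (κ a b) := by
  induction n generalizing a b with
  | zero => simp [numExtensions_zero h]
  | succ n ih =>
    calc numExtensions P T (n + 1) a b
        = ∑ c with ¬ T a b c ∧ ¬ P b c, numExtensions P T n b c := by
          rw [numExtensions_succ h, ← filter_filter,
            sum_filter_of_ne (p := fun c => ¬ P b c)
              fun c _ hc hP => hc (numExtensions_eq_zero hP n)]
      _ = ∑ c with ¬ T a b c ∧ ¬ P b c, (M ^ n *ᵥ 1) (κ b c) :=
          sum_congr rfl fun c hc => ih (mem_filter.mp hc).2.2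
      _ = ∑ j, M (κ a b) j * (M ^ n *ᵥ 1) j := by
          rw [← sum_fiberwise' _ (κ b)]
          simp only [sum_const, filter_filter, hM a b h, smul_eq_mul]
      _ = (M ^ (n + 1) *ᵥ 1) (κ a b) := by
          rw [pow_succ', ← mulVec_mulVec]
          rfl

end Extensions

/-- The class of an admissible pair of consecutive letters: `1` if the next letter is confined to
`B1` or to `B2`, and `0` if it is free up to a single excluded letter. The value on forbidden pairs
is irrelevant. -/
def pairClass (a b : Fin 8) : Fin 2 :=
  if b = 2 ∨ b = 5 ∨ ∃ c, OTtriple a b c then 1 else 0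

/-- The quotient of the transfer graph of `OT⁸` by `pairClass`: the entry at `(i, j)` is the number
of ways to continue a pair of class `i` by one letter so that the new last pair has class `j`. -/
def transferMatrix : Matrix (Fin 2) (Fin 2) ℕ := !![4, 3; 3, 1]

theorem card_continuations_pairClass : ∀ a b, ¬ OTpair a b → ∀ j,
    #{c | (¬ OTtriple a b c ∧ ¬ OTpair b c) ∧ pairClass b c = j} =
      transferMatrix (pairClass a b) j := by
  decide

theorem transferMatrix_sq : transferMatrix ^ 2 = 5 • transferMatrix + 5 • 1 := by
  decide

theorem N8_eq_numExtensions_add (m : ℕ) :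
    N8 m = numExtensions OTpair OTtriple m 2 2 + numExtensions OTpair OTtriple m 5 5 := by
  have h22 : ¬ OTpair 2 2 := by decide
  have h55 : ¬ OTpair 5 5 := by decide
  cases m with
  | zero => rw [numExtensions_zero h22, numExtensions_zero h55]; rfl
  | succ m =>
    have hpair : ∀ c, OTpair 5 c ↔ ¬ OTpair 2 c := by decide
    have htwo : ∀ b c, ¬ OTtriple 2 b c := by decide
    have hfive : ∀ b c, ¬ OTtriple 5 b c := by decide
    simp only [N8, if_neg m.succ_ne_zero, numExtensions, avoids_vecCons_vecCons_self h22 htwo,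
      avoids_vecCons_vecCons_self h55 hfive, hpair, and_comm (b := Avoids _ _ _), ← filter_filter]
    exact (card_filter_add_card_filter_not _).symm

theorem N8_eq_pow_mulVec (m : ℕ) : N8 m = 2 * (transferMatrix ^ m *ᵥ 1) 1 := by
  rw [N8_eq_numExtensions_add,
    numExtensions_eq_pow_mulVec card_continuations_pairClass m (by decide),
    numExtensions_eq_pow_mulVec card_continuations_pairClass m (by decide), two_mul]
  rfl

theorem N8_add_two (n : ℕ) : N8 (n + 2) = 5 * N8 (n + 1) + 5 * N8 n := by
  have hpow : transferMatrix ^ (n + 2) = 5 • transferMatrix ^ (n + 1) + 5 • transferMatrix ^ n := by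
    rw [pow_add, transferMatrix_sq, mul_add, mul_smul_comm, mul_smul_comm, mul_one, pow_succ]
  simp only [N8_eq_pow_mulVec, hpow, add_mulVec, smul_mulVec, Pi.add_apply, Pi.smul_apply,
    smul_eq_mul]
  ring

theorem N8_recursion :
    (∀ m : ℕ, 2 ≤ m → N8 m = 5 * N8 (m - 1) + 5 * N8 (m - 2)) ∧
    N8 1 = 8 ∧ N8 2 = 50 := by
  have hN1 : N8 1 = 8 := by rw [N8_eq_pow_mulVec]; decide
  have hN2 : N8 2 = 50 := by rw [N8_add_two, hN1]; rfl
  refine ⟨fun m hm => ?_, hN1, hN2⟩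
  obtain ⟨n, rfl⟩ := Nat.exists_eq_add_of_le' hm
  exact N8_add_two n

end OTLOCO
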